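/- Let x⃗ = a_1 x⃗_1 + ⋯ + a_n x⃗_n + a c⃗ be an element of 𝕃 in normal form (0 ≤ a_i < p_i, a ∈ ℤ). Then the following are equivalent: (a) x⃗ ≤ d c⃗; (b) a + |{i : a_i > 0}| ≤ d; (c) it is not the case that 0 ≤ x⃗ + ω⃗. In particular, the interval [0, d c⃗] equals {x⃗ ∈ 𝕃 : 0 ≤ x⃗ and not 0 ≤ x⃗ + ω⃗}. -/

import Mathlib

/-- The subgroup of relations `p i • x⃗_i − c⃗` inside the free abelian group
`(Fin n → ℤ) × ℤ` on the generators `x⃗_1, …, x⃗_n, c⃗`. -/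
def GLrels (n : ℕ) (p : Fin n → ℕ) : AddSubgroup ((Fin n → ℤ) × ℤ) :=
  AddSubgroup.closure (Set.range fun i : Fin n => ((Pi.single i (p i : ℤ), -1) : (Fin n → ℤ) × ℤ))

/-- The grading group `𝕃 = ⟨x⃗_1, …, x⃗_n, c⃗⟩ / ⟨p_i x⃗_i − c⃗⟩`. -/
abbrev GLgroup (n : ℕ) (p : Fin n → ℕ) : Type :=
  ((Fin n → ℤ) × ℤ) ⧸ GLrels n p

/-- The generator `x⃗_i` of `𝕃`. -/
def GLx (n : ℕ) (p : Fin n → ℕ) (i : Fin n) : GLgroup n p :=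
  QuotientAddGroup.mk (Pi.single i 1, 0)

/-- The generator `c⃗` of `𝕃`. -/
def GLc (n : ℕ) (p : Fin n → ℕ) : GLgroup n p :=
  QuotientAddGroup.mk (0, 1)

/-- The positive cone `𝕃_+`: the submonoid of `𝕃` generated by `x⃗_1, …, x⃗_n` and `c⃗`. -/
def GLplus (n : ℕ) (p : Fin n → ℕ) : AddSubmonoid (GLgroup n p) :=
  AddSubmonoid.closure ({GLc n p} ∪ Set.range (GLx n p))

/-- The partial order relation on `𝕃`: `x⃗ ≤ y⃗` iff `y⃗ − x⃗ ∈ 𝕃_+`. -/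
def GLle (n : ℕ) (p : Fin n → ℕ) (x y : GLgroup n p) : Prop :=
  y - x ∈ GLplus n p

/-- The dualizing element `ω⃗ = (n − d − 1) c⃗ − Σ_i x⃗_i` of `𝕃`. -/
def GLomega (d n : ℕ) (p : Fin n → ℕ) : GLgroup n p :=
  ((n : ℤ) - d - 1) • GLc n p - ∑ i, GLx n p i

/-- The degree-type invariant `b + Σ ⌊v_i / p_i⌋`. -/
def GLphi (n : ℕ) (p : Fin n → ℕ) (w : (Fin n → ℤ) × ℤ) : ℤ :=
  w.2 + ∑ i, w.1 i / (p i : ℤ)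

theorem GLphi_gen (n : ℕ) (p : Fin n → ℕ) (hp : ∀ i, 0 < p i) (i : Fin n)
    (w : (Fin n → ℤ) × ℤ) :
    GLphi n p (w + (Pi.single i (p i : ℤ), -1)) = GLphi n p w := by
  have h : ∀ j, (w.1 + (Pi.single i (p i : ℤ) : Fin n → ℤ)) j / (p j : ℤ)
      = w.1 j / (p j : ℤ) + if j = i then 1 else 0 := by
    intro j
    have hj : (p j : ℤ) ≠ 0 := by exact_mod_cast (hp j).ne'
    by_cases hji : j = i
    · subst hji
      simp only [Pi.add_apply, Pi.single_eq_same, if_true]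
      rw [Int.add_ediv_of_dvd_right (dvd_refl _), Int.ediv_self hj]
    · simp [hji]
  simp only [GLphi, Prod.fst_add, Prod.snd_add]
  rw [Finset.sum_congr rfl (fun j _ => h j), Finset.sum_add_distrib]
  simp
  ring

theorem GLphi_rel (n : ℕ) (p : Fin n → ℕ) (hp : ∀ i, 0 < p i) (r : (Fin n → ℤ) × ℤ)
    (hr : r ∈ GLrels n p) : ∀ w, GLphi n p (w + r) = GLphi n p w := by
  unfold GLrels at hr
  induction hr using AddSubgroup.closure_induction with
  | mem x hx =>
    obtain ⟨i, rfl⟩ := hx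
    exact GLphi_gen n p hp i
  | zero => simp
  | add x y _ _ hx hy => intro w; rw [← add_assoc, hy, hx]
  | neg x _ hx => intro w; have := hx (w + -x); rw [← this]; simp

theorem GLphi_eq (n : ℕ) (p : Fin n → ℕ) (hp : ∀ i, 0 < p i) (w w' : (Fin n → ℤ) × ℤ)
    (h : (QuotientAddGroup.mk w : GLgroup n p) = QuotientAddGroup.mk w') :
    GLphi n p w = GLphi n p w' := by
  have h1 := QuotientAddGroup.eq.1 h
  have := GLphi_rel n p hp _ h1 w
  rw [← this]; simp

theorem GLphi_add (n : ℕ) (p : Fin n → ℕ) (hp : ∀ i, 0 < p i) (w w' : (Fin n → ℤ) × ℤ) :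
    GLphi n p w + GLphi n p w' ≤ GLphi n p (w + w') := by
  have h : ∑ i, (w.1 i / (p i : ℤ) + w'.1 i / (p i : ℤ)) ≤ ∑ i, (w.1 i + w'.1 i) / (p i : ℤ) := by
    apply Finset.sum_le_sum
    intro i _
    have hi : (0 : ℤ) < (p i : ℤ) := by exact_mod_cast hp i
    rw [Int.le_ediv_iff_mul_le hi, add_mul]
    have h1 := Int.ediv_mul_le (w.1 i) hi.ne'
    have h2 := Int.ediv_mul_le (w'.1 i) hi.ne'
    linarith
  rw [Finset.sum_add_distrib] at h
  simp only [GLphi, Prod.fst_add, Prod.snd_add, Pi.add_apply]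
  linarith

theorem GLrel_c (n : ℕ) (p : Fin n → ℕ) (i : Fin n) :
    (p i : ℤ) • GLx n p i = GLc n p := by
  unfold GLx GLc
  rw [← QuotientAddGroup.mk_zsmul, eq_comm, QuotientAddGroup.eq]
  apply AddSubgroup.subset_closure
  refine ⟨i, ?_⟩
  ext j
  · by_cases h : j = i
    · subst h; simp
    · simp [h]
  · simp

theorem GLmk (n : ℕ) (p : Fin n → ℕ) (v : Fin n → ℤ) (b : ℤ) :
    (QuotientAddGroup.mk (v, b) : GLgroup n p) = (∑ i, v i • GLx n p i) + b • GLc n p := by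
  have h : (v, b) = (∑ i, v i • ((Pi.single i 1, 0) : (Fin n → ℤ) × ℤ))
      + b • ((0, 1) : (Fin n → ℤ) × ℤ) := by
    ext j
    · simp [Prod.fst_sum, Finset.sum_apply, Pi.single_apply]
    · simp [Prod.snd_sum]
  unfold GLx GLc
  rw [h, QuotientAddGroup.mk_add, QuotientAddGroup.mk_sum]
  rfl

theorem GLplus_iff (n : ℕ) (p : Fin n → ℕ) (hp : ∀ i, 0 < p i) (w : (Fin n → ℤ) × ℤ) :
    (QuotientAddGroup.mk w : GLgroup n p) ∈ GLplus n p ↔ 0 ≤ GLphi n p w := by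
  constructor
  · intro h
    have key : ∀ z ∈ GLplus n p, ∀ w : (Fin n → ℤ) × ℤ, QuotientAddGroup.mk w = z →
        0 ≤ GLphi n p w := by
      intro z hz
      unfold GLplus at hz
      induction hz using AddSubmonoid.closure_induction with
      | mem x hx =>
        intro w hw
        rcases hx with hx | ⟨i, rfl⟩
        · rw [Set.mem_singleton_iff] at hx
          subst hx
          rw [GLphi_eq n p hp _ _ hw]
          simp [GLphi]
        · rw [GLphi_eq n p hp _ _ hw]
          simp only [GLphi, zero_add]
          apply Finset.sum_nonneg
          intro j _
          apply Int.ediv_nonneg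
          · by_cases h : j = i
            · subst h; simp
            · simp [h]
          · positivity
      | zero =>
        intro w hw
        rw [GLphi_eq n p hp w 0 hw]
        simp [GLphi]
      | add x y _ _ hx hy =>
        intro w hw
        obtain ⟨u, rfl⟩ := QuotientAddGroup.mk_surjective x
        obtain ⟨v, rfl⟩ := QuotientAddGroup.mk_surjective y
        rw [GLphi_eq n p hp w (u + v) hw]
        have := GLphi_add n p hp u v
        have := hx u rfl
        have := hy v rfl
        linarith
    exact key _ h w rfl
  · intro h
    obtain ⟨v, b⟩ := w
    have e : (QuotientAddGroup.mk (v, b) : GLgroup n p)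
        = (∑ i, (v i % (p i : ℤ)) • GLx n p i) + GLphi n p (v, b) • GLc n p := by
      rw [GLmk]
      have h1 : ∀ i, v i • GLx n p i
          = (v i % (p i : ℤ)) • GLx n p i + (v i / (p i : ℤ)) • GLc n p := by
        intro i
        rw [← GLrel_c n p i, ← mul_smul, ← add_zsmul]
        congr 1
        rw [mul_comm, Int.emod_add_mul_ediv]
      rw [Finset.sum_congr rfl (fun i _ => h1 i), Finset.sum_add_distrib, ← Finset.sum_smul]
      simp only [GLphi, add_zsmul]
      abel
    have hs : ∀ (m : ℤ) (y : GLgroup n p), 0 ≤ m → y ∈ GLplus n p → m • y ∈ GLplus n p := by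
      intro m y hm hy
      lift m to ℕ using hm
      rw [natCast_zsmul]
      exact AddSubmonoid.nsmul_mem _ hy m
    rw [e]
    apply AddSubmonoid.add_mem
    · apply AddSubmonoid.sum_mem
      intro i _
      apply hs
      · apply Int.emod_nonneg
        exact_mod_cast (hp i).ne'
      · exact AddSubmonoid.subset_closure (Or.inr ⟨i, rfl⟩)
    · exact hs _ _ h (AddSubmonoid.subset_closure (Or.inl rfl))

theorem GLneg_ediv (v q : ℤ) (hq : 0 < q) : (-v) / q = -1 - (v - 1) / q := by
  have h1 := Int.emod_add_mul_ediv (v - 1) q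
  have h2 := Int.emod_nonneg (v - 1) hq.ne'
  have h3 := Int.emod_lt_of_pos (v - 1) hq
  rw [Int.ediv_eq_iff_of_pos hq]
  constructor <;> nlinarith

theorem GLle_dc (d n : ℕ) (p : Fin n → ℕ) (hp : ∀ i, 0 < p i) (v : Fin n → ℤ) (b : ℤ) :
    GLle n p (QuotientAddGroup.mk (v, b)) ((d : ℤ) • GLc n p) ↔
      0 ≤ (d : ℤ) - b + ∑ i, (-v i) / (p i : ℤ) := by
  have e : (d : ℤ) • GLc n p - QuotientAddGroup.mk (v, b)
      = (QuotientAddGroup.mk (-v, (d : ℤ) - b) : GLgroup n p) := by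
    rw [GLmk, GLmk]
    simp only [Pi.neg_apply, neg_smul, Finset.sum_neg_distrib, sub_smul]
    abel
  unfold GLle
  rw [e, GLplus_iff n p hp]
  rfl

theorem GLle_omega (d n : ℕ) (p : Fin n → ℕ) (hp : ∀ i, 0 < p i) (v : Fin n → ℤ) (b : ℤ) :
    GLle n p 0 (QuotientAddGroup.mk (v, b) + GLomega d n p) ↔
      0 ≤ b + ((n : ℤ) - d - 1) + ∑ i, (v i - 1) / (p i : ℤ) := by
  have e : QuotientAddGroup.mk (v, b) + GLomega d n p - 0
      = (QuotientAddGroup.mk (fun i => v i - 1, b + ((n : ℤ) - d - 1)) : GLgroup n p) := by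
    rw [GLmk, GLmk, GLomega]
    simp only [sub_smul (_ : ℤ) (1 : ℤ) (GLx n p _), one_smul, Finset.sum_sub_distrib, add_zsmul _ b]
    abel
  unfold GLle
  rw [e, GLplus_iff n p hp]
  rfl

theorem GLac (d n : ℕ) (p : Fin n → ℕ) (hp : ∀ i, 0 < p i) (z : GLgroup n p) :
    GLle n p z ((d : ℤ) • GLc n p) ↔ ¬ GLle n p 0 (z + GLomega d n p) := by
  obtain ⟨⟨v, b⟩, rfl⟩ := QuotientAddGroup.mk_surjective z
  rw [GLle_dc d n p hp, GLle_omega d n p hp]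
  have h : ∑ i, (-v i) / (p i : ℤ) = ∑ i, (-1 - (v i - 1) / (p i : ℤ)) :=
    Finset.sum_congr rfl fun i _ => GLneg_ediv _ _ (by exact_mod_cast hp i)
  rw [h, Finset.sum_sub_distrib]
  simp
  constructor <;> intro h <;> linarith

/-- For `x⃗ = Σ a_i x⃗_i + a c⃗` in normal form, the conditions
(a) `x⃗ ≤ d c⃗`, (b) `a + |{i : a_i > 0}| ≤ d`, and (c) `¬ (0 ≤ x⃗ + ω⃗)` are equivalent;
in particular `[0, d c⃗] = {x⃗ : 0 ≤ x⃗ and ¬ 0 ≤ x⃗ + ω⃗}`. -/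
theorem order_omega (d n : ℕ) (hd : 1 ≤ d) (p : Fin n → ℕ) (hp : ∀ i, 0 < p i)
    (a : Fin n → ℤ) (ha : ∀ i, 0 ≤ a i ∧ a i < (p i : ℤ)) (b : ℤ)
    (x : GLgroup n p) (hx : x = (∑ i, a i • GLx n p i) + b • GLc n p) :
    ((GLle n p x ((d : ℤ) • GLc n p) ↔
        b + ((Finset.univ.filter fun i => 0 < a i).card : ℤ) ≤ (d : ℤ)) ∧
      (GLle n p x ((d : ℤ) • GLc n p) ↔ ¬ GLle n p 0 (x + GLomega d n p))) ∧
    (∀ z : GLgroup n p,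
      (GLle n p 0 z ∧ GLle n p z ((d : ℤ) • GLc n p)) ↔
        (GLle n p 0 z ∧ ¬ GLle n p 0 (z + GLomega d n p))) := by
  refine ⟨⟨?_, GLac d n p hp x⟩, fun z => by rw [GLac d n p hp z]⟩
  rw [hx, ← GLmk, GLle_dc d n p hp]
  have h : ∑ i, (-a i) / (p i : ℤ) = ∑ i, -(if 0 < a i then (1 : ℤ) else 0) := by
    apply Finset.sum_congr rfl
    intro i _
    obtain ⟨h0, h1⟩ := ha i
    have hq : (0 : ℤ) < p i := by exact_mod_cast hp i
    rw [Int.ediv_eq_iff_of_pos hq]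
    split_ifs <;> constructor <;> linarith
  rw [h, Finset.sum_neg_distrib, Finset.sum_boole]
  constructor <;> intro h <;> linarith
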